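/- Let a sequential qubit strategy achieve the optimal witness pair W_AB = α and W_AC = (4 + √2 + √(16α − 16α² − 2))/8 for some α ∈ [1/2, (2+√2)/4]. Then Alice's states are pairwise antipodal and form a square on a disk of the Bloch sphere: ρ_{00} + ρ_{11} = 𝟙, ρ_{01} + ρ_{10} = 𝟙, and tr[ρ_{00} ρ_{01}] = 1/2. -/

import Mathlib

open Matrix ComplexOrder

noncomputable section

/-- The bit `x_y` of `x = (x₀, x₁)`. -/
def bit (x : Bool × Bool) (y : Bool) : Bool := if y then x.2 else x.1

/-- Alice–Bob witness `W_AB = (1/8) ∑_{x,y} tr[ρ_x K_{x_y|y}† K_{x_y|y}]`. -/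
def WAB (ρ : Bool × Bool → Matrix (Fin 2) (Fin 2) ℂ)
    (K : Bool → Bool → Matrix (Fin 2) (Fin 2) ℂ) : ℝ :=
  (1 / 8) * ∑ x : Bool × Bool, ∑ y : Bool,
    ((ρ x * ((K y (bit x y))ᴴ * K y (bit x y))).trace).re

/-- Alice–Charlie witness
`W_AC = (1/16) ∑_{x,y,b,z} tr[K_{b|y} ρ_x K_{b|y}† C_{x_z|z}]`. -/
def WAC (ρ : Bool × Bool → Matrix (Fin 2) (Fin 2) ℂ)
    (K C : Bool → Bool → Matrix (Fin 2) (Fin 2) ℂ) : ℝ :=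
  (1 / 16) * ∑ x : Bool × Bool, ∑ y : Bool, ∑ b : Bool, ∑ z : Bool,
    ((K y b * ρ x * (K y b)ᴴ * C z (bit x z)).trace).re

/-- A sequential qubit strategy: four qubit states, two instruments (Kraus
operators), and two binary POVMs. -/
def ValidStrategy (ρ : Bool × Bool → Matrix (Fin 2) (Fin 2) ℂ)
    (K C : Bool → Bool → Matrix (Fin 2) (Fin 2) ℂ) : Prop :=
  (∀ x, (ρ x).PosSemidef ∧ (ρ x).trace = 1) ∧
  (∀ y, (K y false)ᴴ * K y false + (K y true)ᴴ * K y true = 1) ∧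
  (∀ z b, (C z b).PosSemidef) ∧
  (∀ z, C z false + C z true = 1)

/-!
In Bloch coordinates, Bob's instrument `y` has an outcome vector `b_y` in the unit ball, and the
states enter only through `e_z = ∑_x (-1)^{x_z} r_x`. The witness `W_AB` is affine in
`⟨e₀, b₀⟩ + ⟨e₁, b₁⟩`. A determinant computation shows that an instrument with outcome vector `b`
shrinks `e` to length at most `√((1 - ‖b‖²)‖e‖² + ⟨e, b⟩²)`, and `W_AC` is at most an increasing
affine function of the sum of these lengths over all `y` and `z`. The two lengths with `z = y` sum
to at most `‖e₀‖ + ‖e₁‖`, while the sum `G` of the other two satisfies the trade-off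
`(⟨e₀, b₀⟩ + ⟨e₁, b₁⟩)² + G² ≤ 2 R²`, where `R = 4 ≥ ‖e₀ ± e₁‖`. Optimality therefore
forces `‖e₀‖ + ‖e₁‖ ≥ √2 R`, which saturates the parallelogram law: `‖e₀ ± e₁‖ = R`, so
`r₀₀ = -r₁₁` and `r₀₁ = -r₁₀`, and `e₀ + e₁ ⟂ e₀ - e₁`, so `r₀₀ ⟂ r₀₁`.
-/

section Geometry

variable {E : Type*} [NormedAddCommGroup E] [InnerProductSpace ℝ E]

/-- The bound on the Bloch length that a traceless qubit operator with Bloch vector `e` retains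
under a binary instrument one of whose effects has Bloch vector `b`. The radicand is only
guaranteed to be nonnegative for `‖b‖ ≤ 1`. -/
def retainedLength (b e : E) : ℝ :=
  √((1 - ‖b‖ ^ 2) * ‖e‖ ^ 2 + inner ℝ e b ^ 2)

lemma retainedLength_nonneg (b e : E) : 0 ≤ retainedLength b e :=
  Real.sqrt_nonneg _

lemma inner_sq_le_norm_sq_mul_norm_sq (x y : E) : inner ℝ x y ^ 2 ≤ ‖x‖ ^ 2 * ‖y‖ ^ 2 := by
  rw [← mul_pow, ← sq_abs]
  gcongr
  exact abs_real_inner_le_norm x y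

lemma retainedLength_le_norm (b e : E) : retainedLength b e ≤ ‖e‖ := by
  refine Real.sqrt_le_iff.2 ⟨norm_nonneg e, ?_⟩
  linarith [inner_sq_le_norm_sq_mul_norm_sq e b]

lemma retainedLength_smul (b e : E) (c : ℝ) :
    retainedLength b (c • e) = |c| * retainedLength b e := by
  rw [retainedLength, retainedLength, ← Real.sqrt_sq_eq_abs, ← Real.sqrt_mul (sq_nonneg c),
    norm_smul, real_inner_smul_left, mul_pow, Real.norm_eq_abs, sq_abs]
  congr 1
  ring

lemma retainedLength_sq {b : E} (hb : ‖b‖ ≤ 1) (e : E) :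
    retainedLength b e ^ 2 = (1 - ‖b‖ ^ 2) * ‖e‖ ^ 2 + inner ℝ e b ^ 2 := by
  have hb_sq : 0 ≤ 1 - ‖b‖ ^ 2 := sub_nonneg.2 (pow_le_one₀ (norm_nonneg b) hb)
  exact Real.sq_sqrt (by positivity)

lemma norm_sub_inner_smul_sq {u : E} (hu : ‖u‖ = 1) (x : E) :
    ‖x - inner ℝ x u • u‖ ^ 2 = ‖x‖ ^ 2 - inner ℝ x u ^ 2 := by
  rw [norm_sub_sq_real, real_inner_smul_right, norm_smul, hu, mul_one, Real.norm_eq_abs, sq_abs]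
  ring

lemma abs_inner_le_along_add_across {u : E} (hu : ‖u‖ = 1) (x y : E) :
    |inner ℝ x y| ≤ |inner ℝ x u| * |inner ℝ u y|
      + ‖x - inner ℝ x u • u‖ * ‖y - inner ℝ y u • u‖ := by
  have split : inner ℝ x y = inner ℝ x u * inner ℝ u y
      + inner ℝ (x - inner ℝ x u • u) (y - inner ℝ y u • u) := by
    simp only [inner_sub_left, inner_sub_right, real_inner_smul_left, real_inner_smul_right,
      real_inner_self_eq_norm_sq, hu, real_inner_comm u y]
    ring
  calc |inner ℝ x y|
      ≤ |inner ℝ x u * inner ℝ u y|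
        + |inner ℝ (x - inner ℝ x u • u) (y - inner ℝ y u • u)| := split ▸ abs_add_le _ _
    _ ≤ _ := by
      rw [abs_mul]
      gcongr
      exact abs_real_inner_le_norm _ _

lemma abs_inner_add_retainedLength_sq_le_of_norm_eq_one {b u : E} (hb : ‖b‖ ≤ 1) (hu : ‖u‖ = 1)
    (e : E) {l : ℝ} (hl : 0 ≤ l) :
    (|inner ℝ e b| + l * retainedLength b u) ^ 2 ≤ ‖e‖ ^ 2 + l ^ 2 + 2 * l * |inner ℝ e u| := by
  set p := |inner ℝ e u|
  set c := retainedLength b u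
  set q := ‖e - inner ℝ e u • u‖
  set s := ‖b - inner ℝ b u • u‖
  have c_sq : c ^ 2 = 1 - ‖b‖ ^ 2 + inner ℝ u b ^ 2 := by
    rw [retainedLength_sq hb, hu]
    ring
  have c_sq_add_s_sq : c ^ 2 + s ^ 2 = 1 := by
    rw [c_sq, norm_sub_inner_smul_sq hu, real_inner_comm]
    ring
  have p_sq_add_q_sq : p ^ 2 + q ^ 2 = ‖e‖ ^ 2 := by
    rw [norm_sub_inner_smul_sq hu, sq_abs]
    ring
  have along_le : |inner ℝ u b| ≤ c := by
    refine abs_le_of_sq_le_sq ?_ (retainedLength_nonneg b u)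
    linarith [pow_le_one₀ (n := 2) (norm_nonneg b) hb]
  calc (|inner ℝ e b| + l * c) ^ 2
      ≤ ((p + l) * c + q * s) ^ 2 := by
        have h_inner : |inner ℝ e b| ≤ p * c + q * s :=
          (abs_inner_le_along_add_across hu e b).trans (by gcongr)
        have hc : 0 ≤ c := retainedLength_nonneg b u
        refine pow_le_pow_left₀ (by positivity) ?_ 2
        linarith
    _ ≤ ((p + l) ^ 2 + q ^ 2) * (c ^ 2 + s ^ 2) := by
        linarith [sq_nonneg ((p + l) * s - q * c)]
    _ = ‖e‖ ^ 2 + l ^ 2 + 2 * l * p := by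
        rw [c_sq_add_s_sq, ← p_sq_add_q_sq]
        ring

lemma abs_inner_add_retainedLength_sq_le {b : E} (hb : ‖b‖ ≤ 1) (e f : E) :
    (|inner ℝ e b| + retainedLength b f) ^ 2 ≤ ‖e‖ ^ 2 + ‖f‖ ^ 2 + 2 * |inner ℝ e f| := by
  rcases eq_or_ne f 0 with rfl | hf
  · have h_inner : |inner ℝ e b| ≤ ‖e‖ :=
      (abs_real_inner_le_norm e b).trans (mul_le_of_le_one_right (norm_nonneg e) hb)
    simpa [retainedLength] using sq_le_sq₀ (abs_nonneg _) (norm_nonneg e) |>.2 h_inner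
  · obtain ⟨u, hu, hfu⟩ : ∃ u : E, ‖u‖ = 1 ∧ ‖f‖ • u = f :=
      ⟨‖f‖⁻¹ • f, norm_smul_inv_norm hf, smul_inv_smul₀ (norm_ne_zero_iff.2 hf) f⟩
    have h_unit := abs_inner_add_retainedLength_sq_le_of_norm_eq_one hb hu e (norm_nonneg f)
    have h_length : retainedLength b f = ‖f‖ * retainedLength b u := by
      conv_lhs => rw [← hfu, retainedLength_smul, abs_norm]
    have h_inner : |inner ℝ e f| = ‖f‖ * |inner ℝ e u| := by
      conv_lhs => rw [← hfu, real_inner_smul_right, abs_mul, abs_norm]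
    rw [h_length, h_inner, ← mul_assoc]
    exact h_unit

lemma norm_sq_add_norm_sq_add_two_mul_abs_inner_le {e₀ e₁ : E} {R : ℝ}
    (hadd : ‖e₀ + e₁‖ ≤ R) (hsub : ‖e₀ - e₁‖ ≤ R) :
    ‖e₀‖ ^ 2 + ‖e₁‖ ^ 2 + 2 * |inner ℝ e₀ e₁| ≤ R ^ 2 := by
  have hadd_sq : ‖e₀ + e₁‖ ^ 2 ≤ R ^ 2 := by gcongr
  have hsub_sq : ‖e₀ - e₁‖ ^ 2 ≤ R ^ 2 := by gcongr
  rw [norm_add_sq_real] at hadd_sq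
  rw [norm_sub_sq_real] at hsub_sq
  rcases abs_cases (inner ℝ e₀ e₁) with ⟨h, -⟩ | ⟨h, -⟩ <;> linarith

lemma mul_inner_add_mul_retainedLength_sq_le {b : E} (hb : ‖b‖ ≤ 1) (e f : E) (β γ : ℝ) :
    (β * inner ℝ e b + γ * retainedLength b f) ^ 2
      ≤ β ^ 2 * ‖e‖ ^ 2 + γ ^ 2 * ‖f‖ ^ 2 + 2 * (|β| * |γ|) * |inner ℝ e f| := by
  have h_abs : |β * inner ℝ e b + γ * retainedLength b f|
      ≤ |inner ℝ (β • e) b| + retainedLength b (γ • f) := by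
    rw [real_inner_smul_left, retainedLength_smul]
    refine (abs_add_le _ _).trans_eq ?_
    rw [abs_mul γ, abs_of_nonneg (retainedLength_nonneg b f)]
  calc (β * inner ℝ e b + γ * retainedLength b f) ^ 2
      ≤ (|inner ℝ (β • e) b| + retainedLength b (γ • f)) ^ 2 :=
        sq_le_sq.2 (h_abs.trans (le_abs_self _))
    _ ≤ ‖β • e‖ ^ 2 + ‖γ • f‖ ^ 2 + 2 * |inner ℝ (β • e) (γ • f)| :=
        abs_inner_add_retainedLength_sq_le hb _ _
    _ = β ^ 2 * ‖e‖ ^ 2 + γ ^ 2 * ‖f‖ ^ 2 + 2 * (|β| * |γ|) * |inner ℝ e f| := by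
        simp only [norm_smul, real_inner_smul_left, real_inner_smul_right, abs_mul, mul_pow,
          Real.norm_eq_abs, sq_abs]
        ring

theorem inner_retainedLength_tradeoff {e₀ e₁ b₀ b₁ : E} {R : ℝ} (hb₀ : ‖b₀‖ ≤ 1) (hb₁ : ‖b₁‖ ≤ 1)
    (hadd : ‖e₀ + e₁‖ ≤ R) (hsub : ‖e₀ - e₁‖ ≤ R) :
    (inner ℝ e₀ b₀ + inner ℝ e₁ b₁) ^ 2 + (retainedLength b₀ e₁ + retainedLength b₁ e₀) ^ 2
      ≤ 2 * R ^ 2 := by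
  set B := inner ℝ e₀ b₀ + inner ℝ e₁ b₁ with hB
  set G := retainedLength b₀ e₁ + retainedLength b₁ e₀ with hG
  -- Weighting the two bounds by `B` and `G` themselves makes their left-hand sides add up to `N`.
  set N := B ^ 2 + G ^ 2
  set X := B * inner ℝ e₀ b₀ + G * retainedLength b₀ e₁
  set Y := B * inner ℝ e₁ b₁ + G * retainedLength b₁ e₀
  have N_nonneg : 0 ≤ N := by positivity
  have add_eq : X + Y = N := by
    linear_combination -B * hB - G * hG
  have cross_le : 2 * (|B| * |G|) ≤ N := by
    linarith [sq_nonneg (|B| - |G|), sq_abs B, sq_abs G]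
  have sq_add_sq_le : X ^ 2 + Y ^ 2 ≤ N * R ^ 2 := by
    have hX_sq := mul_inner_add_mul_retainedLength_sq_le hb₀ e₀ e₁ B G
    have hY_sq := mul_inner_add_mul_retainedLength_sq_le hb₁ e₁ e₀ B G
    rw [real_inner_comm e₀ e₁] at hY_sq
    have h_cross := mul_le_mul_of_nonneg_right cross_le (abs_nonneg (inner ℝ e₀ e₁))
    have h_radius := mul_le_mul_of_nonneg_left
      (norm_sq_add_norm_sq_add_two_mul_abs_inner_le hadd hsub) N_nonneg
    linarith
  have mul_self_le : N * N ≤ 2 * R ^ 2 * N := by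
    rw [← add_eq] at sq_add_sq_le ⊢
    linarith [sq_nonneg (X - Y)]
  rcases N_nonneg.eq_or_lt with h_zero | h_pos
  · rw [← h_zero]
    positivity
  · exact le_of_mul_le_mul_right mul_self_le h_pos

lemma norm_add_eq_and_norm_sub_eq_and_norm_eq {e₀ e₁ : E} {R : ℝ}
    (hadd : ‖e₀ + e₁‖ ≤ R) (hsub : ‖e₀ - e₁‖ ≤ R) (hsum : √2 * R ≤ ‖e₀‖ + ‖e₁‖) :
    ‖e₀ + e₁‖ = R ∧ ‖e₀ - e₁‖ = R ∧ ‖e₀‖ = ‖e₁‖ := by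
  have hR : 0 ≤ R := (norm_nonneg _).trans hadd
  have hsum_sq : 2 * R ^ 2 ≤ (‖e₀‖ + ‖e₁‖) ^ 2 :=
    calc 2 * R ^ 2 = (√2 * R) ^ 2 := by rw [mul_pow, Real.sq_sqrt zero_le_two]
      _ ≤ (‖e₀‖ + ‖e₁‖) ^ 2 := by gcongr
  have hadd_sq : ‖e₀ + e₁‖ ^ 2 ≤ R ^ 2 := by gcongr
  have hsub_sq : ‖e₀ - e₁‖ ^ 2 ≤ R ^ 2 := by gcongr
  have parallelogram := parallelogram_law_with_norm ℝ e₀ e₁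
  have hdiff := sq_nonneg (‖e₀‖ - ‖e₁‖)
  refine ⟨?_, ?_, sub_eq_zero.1 (pow_eq_zero_iff two_ne_zero |>.1 ?_)⟩
  · exact (pow_left_inj₀ (norm_nonneg _) hR two_ne_zero).1 (by linarith)
  · exact (pow_left_inj₀ (norm_nonneg _) hR two_ne_zero).1 (by linarith)
  · linarith

theorem square_of_saturated_tradeoff {e₀ e₁ b₀ b₁ : E} {R : ℝ} (hb₀ : ‖b₀‖ ≤ 1) (hb₁ : ‖b₁‖ ≤ 1)
    (hadd : ‖e₀ + e₁‖ ≤ R) (hsub : ‖e₀ - e₁‖ ≤ R)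
    (hsat : √2 * R + √(2 * R ^ 2 - (inner ℝ e₀ b₀ + inner ℝ e₁ b₁) ^ 2)
      ≤ retainedLength b₀ e₀ + retainedLength b₁ e₁
        + (retainedLength b₀ e₁ + retainedLength b₁ e₀)) :
    ‖e₀ + e₁‖ = R ∧ ‖e₀ - e₁‖ = R ∧ inner ℝ (e₀ + e₁) (e₀ - e₁) = 0 := by
  have tradeoff := inner_retainedLength_tradeoff hb₀ hb₁ hadd hsub
  have cross_le : retainedLength b₀ e₁ + retainedLength b₁ e₀
      ≤ √(2 * R ^ 2 - (inner ℝ e₀ b₀ + inner ℝ e₁ b₁) ^ 2) :=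
    Real.le_sqrt_of_sq_le (by linarith)
  rw [real_inner_add_sub_eq_zero_iff]
  apply norm_add_eq_and_norm_sub_eq_and_norm_eq hadd hsub
  linarith [retainedLength_le_norm b₀ e₀, retainedLength_le_norm b₁ e₁]

lemma eq_neg_of_norm_sub_eq {r q : E} {c : ℝ} (hr : ‖r‖ ≤ c) (hq : ‖q‖ ≤ c)
    (h : ‖r - q‖ = 2 * c) : q = -r := by
  have hr_sq : ‖r‖ ^ 2 ≤ c ^ 2 := by gcongr
  have hq_sq : ‖q‖ ^ 2 ≤ c ^ 2 := by gcongr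
  have parallelogram := parallelogram_law_with_norm ℝ r q
  have h_add : ‖r + q‖ ^ 2 = 0 := by
    rw [h] at parallelogram
    linarith [sq_nonneg ‖r + q‖]
  exact eq_neg_of_add_eq_zero_right (norm_eq_zero.1 (pow_eq_zero_iff two_ne_zero |>.1 h_add))

end Geometry

section Bloch

variable {A B : Matrix (Fin 2) (Fin 2) ℂ}

/-- The Bloch vector `(tr[A σ_x], tr[A σ_y], tr[A σ_z])` of a Hermitian qubit operator `A`. It is
read off the lower left entry and the diagonal, so it is meaningful for Hermitian `A` only. -/
def blochVector : Matrix (Fin 2) (Fin 2) ℂ →ₗ[ℝ] EuclideanSpace ℝ (Fin 3) where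
  toFun A := !₂[2 * (A 1 0).re, 2 * (A 1 0).im, (A 0 0).re - (A 1 1).re]
  map_add' A B := by
    ext i
    fin_cases i <;> simp <;> ring
  map_smul' c A := by
    ext i
    fin_cases i <;> simp <;> ring

lemma blochVector_one : blochVector 1 = 0 := by
  ext i
  fin_cases i <;> simp [blochVector]

lemma eq_of_trace_of_blochVector (hA : A.IsHermitian) :
    A = (1 / 2 : ℂ) • !![(A.trace.re + blochVector A 2 : ℂ),
      blochVector A 0 - blochVector A 1 * Complex.I;
      blochVector A 0 + blochVector A 1 * Complex.I, A.trace.re - blochVector A 2] := by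
  have h00 := Complex.conj_eq_iff_im.1 (hA.apply 0 0)
  have h11 := Complex.conj_eq_iff_im.1 (hA.apply 1 1)
  have h01 := hA.apply 0 1
  ext i j
  fin_cases i <;> fin_cases j <;> apply Complex.ext <;>
    simp [blochVector, trace_fin_two, h00, h11, ← h01] <;> ring

lemma ext_of_trace_of_blochVector (hA : A.IsHermitian) (hB : B.IsHermitian)
    (htrace : A.trace = B.trace) (hbloch : blochVector A = blochVector B) : A = B := by
  rw [eq_of_trace_of_blochVector hA, eq_of_trace_of_blochVector hB, htrace, hbloch]

lemma trace_mul_eq_inner_blochVector (hA : A.IsHermitian) (hB : B.IsHermitian) :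
    (A * B).trace
      = ((A.trace.re * B.trace.re + inner ℝ (blochVector A) (blochVector B)) / 2 : ℝ) := by
  conv_lhs => rw [eq_of_trace_of_blochVector hA, eq_of_trace_of_blochVector hB]
  rw [PiLp.inner_apply, Fin.sum_univ_three]
  apply Complex.ext <;> simp [trace_fin_two] <;> ring

lemma det_eq_norm_blochVector (hA : A.IsHermitian) :
    A.det = ((A.trace.re ^ 2 - ‖blochVector A‖ ^ 2) / 4 : ℝ) := by
  conv_lhs => rw [eq_of_trace_of_blochVector hA]
  rw [EuclideanSpace.norm_sq_eq, Fin.sum_univ_three]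
  simp only [Real.norm_eq_abs, sq_abs]
  apply Complex.ext <;> simp [det_fin_two, -Complex.ofReal_pow] <;> ring

lemma norm_blochVector_le_trace (hA : A.PosSemidef) : ‖blochVector A‖ ≤ A.trace.re := by
  have hdet : 0 ≤ (A.trace.re ^ 2 - ‖blochVector A‖ ^ 2) / 4 := by
    have := hA.det_nonneg
    rw [det_eq_norm_blochVector hA.isHermitian] at this
    exact_mod_cast this
  exact le_of_sq_le_sq (by linarith) (Complex.le_def.1 hA.trace_nonneg).1

lemma norm_blochVector_le_one_of_trace_eq_one (hA : A.PosSemidef) (htrace : A.trace = 1) :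
    ‖blochVector A‖ ≤ 1 := by
  simpa [htrace] using norm_blochVector_le_trace hA

lemma blochVector_eq_neg_of_add_eq_one (h : A + B = 1) : blochVector B = -blochVector A := by
  apply eq_neg_of_add_eq_zero_right
  rw [← map_add, h, blochVector_one]

lemma trace_re_add_eq_two_of_add_eq_one (h : A + B = 1) : A.trace.re + B.trace.re = 2 := by
  rw [← Complex.add_re, ← trace_add, h]
  simp

lemma norm_blochVector_le_one_of_add_eq_one (hA : A.PosSemidef) (hB : B.PosSemidef)
    (h : A + B = 1) : ‖blochVector A‖ ≤ 1 := by
  have hB_le := norm_blochVector_le_trace hB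
  rw [blochVector_eq_neg_of_add_eq_one h, norm_neg] at hB_le
  linarith [norm_blochVector_le_trace hA, trace_re_add_eq_two_of_add_eq_one h]

lemma add_eq_one_of_blochVector_eq_neg (hA : A.IsHermitian) (hB : B.IsHermitian)
    (hA_trace : A.trace = 1) (hB_trace : B.trace = 1) (h : blochVector B = -blochVector A) :
    A + B = 1 := by
  apply ext_of_trace_of_blochVector (hA.add hB) isHermitian_one
  · rw [trace_add, hA_trace, hB_trace, trace_one]
    norm_num
  · rw [map_add, h, add_neg_cancel, blochVector_one]

end Bloch

section Instrument

lemma trace_mul_mul_conjTranspose {n R : Type*} [Fintype n] [CommRing R] [StarRing R]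
    (L A : Matrix n n R) : (L * A * Lᴴ).trace = (A * (Lᴴ * L)).trace := by
  rw [Matrix.mul_assoc, trace_mul_comm, Matrix.mul_assoc]

/-- The channel `A ↦ ∑ b, K b * A * (K b)ᴴ` obtained from an instrument with Kraus operators `K`
by ignoring its outcome. It is bundled as an `ℝ`-linear map, like `blochVector`. -/
def krausMap {n β : Type*} [Fintype n] [Fintype β] (K : β → Matrix n n ℂ) :
    Matrix n n ℂ →ₗ[ℝ] Matrix n n ℂ where
  toFun A := ∑ b, K b * A * (K b)ᴴ
  map_add' A B := by
    simp only [Matrix.mul_add, Matrix.add_mul, Finset.sum_add_distrib]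
  map_smul' c A := by
    simp only [Matrix.mul_smul, Matrix.smul_mul, Finset.smul_sum, RingHom.id_apply]

lemma krausMap_apply {n β : Type*} [Fintype n] [Fintype β] (K : β → Matrix n n ℂ)
    (A : Matrix n n ℂ) : krausMap K A = ∑ b, K b * A * (K b)ᴴ :=
  rfl

lemma isHermitian_krausMap {n β : Type*} [Fintype n] [Fintype β] (K : β → Matrix n n ℂ)
    {A : Matrix n n ℂ} (hA : A.IsHermitian) : (krausMap K A).IsHermitian := by
  rw [IsHermitian, krausMap_apply, conjTranspose_sum]
  exact Finset.sum_congr rfl fun b _ => isHermitian_mul_mul_conjTranspose (K b) hA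

lemma trace_krausMap {n β : Type*} [Fintype n] [DecidableEq n] [Fintype β] {K : β → Matrix n n ℂ}
    (hK : ∑ b, (K b)ᴴ * K b = 1) (A : Matrix n n ℂ) : (krausMap K A).trace = A.trace := by
  simp only [krausMap_apply, trace_sum, trace_mul_mul_conjTranspose]
  rw [← trace_sum, ← Matrix.mul_sum, hK, Matrix.mul_one]

variable {K : Bool → Matrix (Fin 2) (Fin 2) ℂ} {D : Matrix (Fin 2) (Fin 2) ℂ}

lemma norm_blochVector_mul_mul_conjTranspose_sq (L : Matrix (Fin 2) (Fin 2) ℂ) (hD : D.IsHermitian)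
    (htrace : D.trace = 0) :
    ‖blochVector (L * D * Lᴴ)‖ ^ 2 = (inner ℝ (blochVector D) (blochVector (Lᴴ * L)) / 2) ^ 2
      + ((Lᴴ * L).trace.re ^ 2 - ‖blochVector (Lᴴ * L)‖ ^ 2) / 4 * ‖blochVector D‖ ^ 2 := by
  have hM : (Lᴴ * L).IsHermitian := isHermitian_conjTranspose_mul_self L
  have hdet : (L * D * Lᴴ).det = (Lᴴ * L).det * D.det := by
    simp only [det_mul]
    ring
  rw [det_eq_norm_blochVector (isHermitian_mul_mul_conjTranspose L hD),
    det_eq_norm_blochVector hM, det_eq_norm_blochVector hD, trace_mul_mul_conjTranspose,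
    trace_mul_eq_inner_blochVector hD hM, htrace] at hdet
  norm_cast at hdet
  linarith

lemma add_sq_le_of_sq_eq {x y t u E k : ℝ} (hk : 0 ≤ k) (hE : 0 ≤ E) (htu : t + u = 1)
    (hx : x ^ 2 = t ^ 2 * E - k) (hy : y ^ 2 = u ^ 2 * E - k) (hk_le : k ≤ t * u * E) :
    (x + y) ^ 2 ≤ E - 4 * k := by
  have hxy : x * y ≤ t * u * E - k := by
    refine le_of_sq_le_sq ?_ (by linarith)
    calc (x * y) ^ 2 = (t * u * E - k) ^ 2 - k * E * (t - u) ^ 2 := by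
          rw [mul_pow, hx, hy]
          ring
      _ ≤ (t * u * E - k) ^ 2 := sub_le_self _ (by positivity)
  calc (x + y) ^ 2 = (t ^ 2 + u ^ 2) * E - 2 * k + 2 * (x * y) := by linear_combination hx + hy
    _ ≤ (t + u) ^ 2 * E - 4 * k := by linarith
    _ = E - 4 * k := by rw [htu, one_pow, one_mul]

theorem norm_blochVector_krausMap_le (hK : (K false)ᴴ * K false + (K true)ᴴ * K true = 1)
    (hD : D.IsHermitian) (htrace : D.trace = 0) :
    ‖blochVector (krausMap K D)‖
      ≤ retainedLength (blochVector ((K false)ᴴ * K false)) (blochVector D) := by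
  have norm_le_false := norm_blochVector_le_trace (posSemidef_conjTranspose_mul_self (K false))
  have norm_le_true := norm_blochVector_le_trace (posSemidef_conjTranspose_mul_self (K true))
  have norm_sq_false := norm_blochVector_mul_mul_conjTranspose_sq (K false) hD htrace
  have norm_sq_true := norm_blochVector_mul_mul_conjTranspose_sq (K true) hD htrace
  have trace_sum := trace_re_add_eq_two_of_add_eq_one hK
  rw [blochVector_eq_neg_of_add_eq_one hK, norm_neg] at norm_le_true norm_sq_true
  rw [inner_neg_right] at norm_sq_true
  set m := blochVector ((K false)ᴴ * K false)
  set e := blochVector D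
  set t := ((K false)ᴴ * K false).trace.re
  set u := ((K true)ᴴ * K true).trace.re
  have m_sq_le : ‖m‖ ^ 2 ≤ t * u := by
    rw [sq]
    exact mul_le_mul norm_le_false norm_le_true (norm_nonneg m)
      ((norm_nonneg m).trans norm_le_false)
  have m_sq_mul_le := mul_le_mul_of_nonneg_right m_sq_le (sq_nonneg ‖e‖)
  have cauchy_schwarz := inner_sq_le_norm_sq_mul_norm_sq e m
  calc ‖blochVector (krausMap K D)‖
      ≤ ‖blochVector (K true * D * (K true)ᴴ)‖ + ‖blochVector (K false * D * (K false)ᴴ)‖ := by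
        rw [krausMap_apply, Fintype.sum_bool, map_add]
        exact norm_add_le _ _
    _ ≤ retainedLength m e := by
        refine Real.le_sqrt_of_sq_le ((add_sq_le_of_sq_eq (t := u / 2) (u := t / 2) (E := ‖e‖ ^ 2)
          (k := (‖m‖ ^ 2 * ‖e‖ ^ 2 - inner ℝ e m ^ 2) / 4)
          ?_ (sq_nonneg _) ?_ ?_ ?_ ?_).trans_eq ?_) <;> linarith [sq_nonneg (inner ℝ e m)]

lemma trace_krausMap_mul_le {C : Matrix (Fin 2) (Fin 2) ℂ}
    (hK : (K false)ᴴ * K false + (K true)ᴴ * K true = 1) (hD : D.IsHermitian)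
    (htrace : D.trace = 0) (hC : C.IsHermitian) (hC_norm : ‖blochVector C‖ ≤ 1) :
    (krausMap K D * C).trace.re
      ≤ retainedLength (blochVector ((K false)ᴴ * K false)) (blochVector D) / 2 := by
  rw [trace_mul_eq_inner_blochVector (isHermitian_krausMap K hD) hC,
    trace_krausMap (by rwa [Fintype.sum_bool, add_comm]), htrace, Complex.ofReal_re,
    Complex.zero_re, zero_mul, zero_add]
  gcongr
  calc inner ℝ (blochVector (krausMap K D)) (blochVector C)
      ≤ ‖blochVector (krausMap K D)‖ * ‖blochVector C‖ := real_inner_le_norm _ _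
    _ ≤ ‖blochVector (krausMap K D)‖ := mul_le_of_le_one_right (norm_nonneg _) hC_norm
    _ ≤ _ := norm_blochVector_krausMap_le hK hD htrace

end Instrument

section BitDifference

/-- The signed sum `∑_x (-1)^{x_z} f x`, which isolates the dependence of `f` on the bit `x_z`. -/
def bitDifference {V : Type*} [AddCommGroup V] (f : Bool × Bool → V) (z : Bool) : V :=
  ∑ x, if bit x z then -f x else f x

lemma map_bitDifference {V W F : Type*} [AddCommGroup V] [AddCommGroup W] [FunLike F V W]
    [AddMonoidHomClass F V W] (φ : F) (f : Bool × Bool → V) (z : Bool) :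
    φ (bitDifference f z) = bitDifference (fun x => φ (f x)) z := by
  simp only [bitDifference, map_sum, apply_ite φ, map_neg]

lemma bitDifference_const {V : Type*} [AddCommGroup V] (v : V) (z : Bool) :
    bitDifference (fun _ => v) z = 0 := by
  cases z <;> simp [bitDifference, Fintype.sum_prod_type, bit]

lemma bitDifference_add_bitDifference {V : Type*} [AddCommGroup V] [Module ℝ V]
    (f : Bool × Bool → V) :
    bitDifference f false + bitDifference f true
      = (2 : ℝ) • (f (false, false) - f (true, true)) := by
  simp only [bitDifference, Fintype.sum_prod_type, Fintype.sum_bool, bit, if_true,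
    Bool.false_eq_true, if_false]
  module

lemma bitDifference_sub_bitDifference {V : Type*} [AddCommGroup V] [Module ℝ V]
    (f : Bool × Bool → V) :
    bitDifference f false - bitDifference f true
      = (2 : ℝ) • (f (false, true) - f (true, false)) := by
  simp only [bitDifference, Fintype.sum_prod_type, Fintype.sum_bool, bit, if_true,
    Bool.false_eq_true, if_false]
  module

variable {n : Type*} {ρ : Bool × Bool → Matrix n n ℂ}

lemma isHermitian_bitDifference (hρ : ∀ x, (ρ x).IsHermitian) (z : Bool) :
    (bitDifference ρ z).IsHermitian := by
  rw [IsHermitian, ← conjTransposeAddEquiv_apply, map_bitDifference]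
  simp only [conjTransposeAddEquiv_apply, (hρ _).eq]

lemma trace_bitDifference [Fintype n] (htrace : ∀ x, (ρ x).trace = 1) (z : Bool) :
    (bitDifference ρ z).trace = 0 := by
  rw [← traceAddMonoidHom_apply, map_bitDifference]
  simp only [traceAddMonoidHom_apply, htrace, bitDifference_const]

lemma sum_trace_mul_bit [Fintype n] [DecidableEq n] (htrace : ∀ x, (ρ x).trace = 1)
    {M : Bool → Matrix n n ℂ} (hM : M false + M true = 1) (z : Bool) :
    ∑ x, (ρ x * M (bit x z)).trace.re = 2 + (bitDifference ρ z * M false).trace.re := by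
  have trace_true : ∀ x, (ρ x * M true).trace.re = 1 - (ρ x * M false).trace.re := by
    intro x
    rw [eq_sub_of_add_eq' hM, Matrix.mul_sub, Matrix.mul_one, trace_sub, htrace, Complex.sub_re,
      Complex.one_re]
  cases z <;>
  · simp only [bitDifference, Fintype.sum_prod_type, Fintype.sum_bool, bit, if_true,
      Bool.false_eq_true, if_false, Matrix.add_mul, Matrix.neg_mul, trace_add, trace_neg,
      Complex.add_re, Complex.neg_re, trace_true]
    ring

end BitDifference

section Witnesses

/-- The vector `e_z = ∑_x (-1)^{x_z} r_x`, where `r_x` is the Bloch vector of `ρ x`: the direction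
in which Alice's states encode the bit `x_z`. -/
def encodingVector (ρ : Bool × Bool → Matrix (Fin 2) (Fin 2) ℂ) (z : Bool) :
    EuclideanSpace ℝ (Fin 3) :=
  bitDifference (fun x => blochVector (ρ x)) z

/-- The Bloch vector of the effect of outcome `0` of Bob's instrument `y`. For a valid instrument
the effect of outcome `1` has the opposite Bloch vector. -/
def outcomeVector (K : Bool → Bool → Matrix (Fin 2) (Fin 2) ℂ) (y : Bool) :
    EuclideanSpace ℝ (Fin 3) :=
  blochVector ((K y false)ᴴ * K y false)

variable {ρ : Bool × Bool → Matrix (Fin 2) (Fin 2) ℂ} {K C : Bool → Bool → Matrix (Fin 2) (Fin 2) ℂ}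

lemma blochVector_bitDifference (ρ : Bool × Bool → Matrix (Fin 2) (Fin 2) ℂ) (z : Bool) :
    blochVector (bitDifference ρ z) = encodingVector ρ z :=
  map_bitDifference blochVector ρ z

lemma norm_outcomeVector_le_one (hK : ∀ y, (K y false)ᴴ * K y false + (K y true)ᴴ * K y true = 1)
    (y : Bool) : ‖outcomeVector K y‖ ≤ 1 :=
  norm_blochVector_le_one_of_add_eq_one (posSemidef_conjTranspose_mul_self _)
    (posSemidef_conjTranspose_mul_self _) (hK y)

lemma WAB_eq_sum_inner (hρ : ∀ x, (ρ x).IsHermitian) (htrace : ∀ x, (ρ x).trace = 1)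
    (hK : ∀ y, (K y false)ᴴ * K y false + (K y true)ᴴ * K y true = 1) :
    WAB ρ K = 1 / 2 + (1 / 16) * ∑ y, inner ℝ (encodingVector ρ y) (outcomeVector K y) := by
  have score : ∀ y, ∑ x, (ρ x * ((K y (bit x y))ᴴ * K y (bit x y))).trace.re
      = 2 + inner ℝ (encodingVector ρ y) (outcomeVector K y) / 2 := by
    intro y
    rw [sum_trace_mul_bit (M := fun b => (K y b)ᴴ * K y b) htrace (hK y) y,
      trace_mul_eq_inner_blochVector (isHermitian_bitDifference hρ y)
        (isHermitian_conjTranspose_mul_self (K y false)),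
      trace_bitDifference htrace, blochVector_bitDifference, Complex.ofReal_re, Complex.zero_re,
      zero_mul, zero_add, outcomeVector]
  rw [WAB, Finset.sum_comm]
  simp only [score, Fintype.sum_bool]
  ring

lemma WAC_le_sum_retainedLength (hρ : ∀ x, (ρ x).IsHermitian) (htrace : ∀ x, (ρ x).trace = 1)
    (hK : ∀ y, (K y false)ᴴ * K y false + (K y true)ᴴ * K y true = 1)
    (hC : ∀ z b, (C z b).PosSemidef) (hC_sum : ∀ z, C z false + C z true = 1) :
    WAC ρ K C ≤ 1 / 2
      + (1 / 32) * ∑ y, ∑ z, retainedLength (outcomeVector K y) (encodingVector ρ z) := by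
  have score : ∀ y z, ∑ x, (krausMap (K y) (ρ x) * C z (bit x z)).trace.re
      ≤ 2 + retainedLength (outcomeVector K y) (encodingVector ρ z) / 2 := by
    intro y z
    have hK_sum : ∑ b, (K y b)ᴴ * K y b = 1 := by rw [Fintype.sum_bool, add_comm, hK]
    rw [sum_trace_mul_bit (fun x => (trace_krausMap hK_sum (ρ x)).trans (htrace x)) (hC_sum z),
      ← map_bitDifference, ← blochVector_bitDifference]
    gcongr
    exact trace_krausMap_mul_le (hK y) (isHermitian_bitDifference hρ z)
      (trace_bitDifference htrace z) (hC z false).isHermitian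
      (norm_blochVector_le_one_of_add_eq_one (hC z false) (hC z true) (hC_sum z))
  have WAC_eq : WAC ρ K C
      = (1 / 16) * ∑ y, ∑ z, ∑ x, (krausMap (K y) (ρ x) * C z (bit x z)).trace.re := by
    simp only [WAC, krausMap_apply, Fintype.sum_prod_type, Fintype.sum_bool, Matrix.add_mul,
      trace_add, Complex.add_re]
    ring
  rw [WAC_eq]
  simp only [Fintype.sum_bool]
  linarith [score false false, score false true, score true false, score true true]

lemma four_mul_sqrt_radicand_eq {B W : ℝ} (hW : W = 1 / 2 + 1 / 16 * B) :
    4 * √(16 * W - 16 * W ^ 2 - 2) = √(2 * 4 ^ 2 - B ^ 2) := by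
  have h16 : (2 * 4 ^ 2 - B ^ 2 : ℝ) = 4 ^ 2 * (16 * W - 16 * W ^ 2 - 2) := by
    rw [hW]
    ring
  rw [h16, Real.sqrt_mul (by positivity), Real.sqrt_sq (by positivity)]

theorem encodingVector_square_of_optimal (hvalid : ValidStrategy ρ K C)
    (hopt : (4 + √2 + √(16 * WAB ρ K - 16 * WAB ρ K ^ 2 - 2)) / 8 ≤ WAC ρ K C) :
    ‖encodingVector ρ false + encodingVector ρ true‖ = 4 ∧
    ‖encodingVector ρ false - encodingVector ρ true‖ = 4 ∧
    inner ℝ (encodingVector ρ false + encodingVector ρ true)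
      (encodingVector ρ false - encodingVector ρ true) = 0 := by
  obtain ⟨hρ, hK, hC, hC_sum⟩ := hvalid
  have hherm := fun x => (hρ x).1.isHermitian
  have htrace := fun x => (hρ x).2
  have norm_two_smul_sub_le : ∀ x w, ‖(2 : ℝ) • (blochVector (ρ x) - blochVector (ρ w))‖ ≤ 4 := by
    intro x w
    rw [norm_smul, Real.norm_two]
    linarith [norm_sub_le (blochVector (ρ x)) (blochVector (ρ w)),
      norm_blochVector_le_one_of_trace_eq_one (hρ x).1 (hρ x).2,
      norm_blochVector_le_one_of_trace_eq_one (hρ w).1 (hρ w).2]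
  apply square_of_saturated_tradeoff (norm_outcomeVector_le_one hK false)
    (norm_outcomeVector_le_one hK true)
  · rw [encodingVector, encodingVector, bitDifference_add_bitDifference]
    exact norm_two_smul_sub_le _ _
  · rw [encodingVector, encodingVector, bitDifference_sub_bitDifference]
    exact norm_two_smul_sub_le _ _
  · have hWAB := WAB_eq_sum_inner hherm htrace hK
    have hWAC := WAC_le_sum_retainedLength hherm htrace hK hC hC_sum
    rw [Fintype.sum_bool, add_comm (inner ℝ _ _)] at hWAB
    simp only [Fintype.sum_bool] at hWAC
    linarith [four_mul_sqrt_radicand_eq hWAB]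

theorem selftest_states_square_general (ρ : Bool × Bool → Matrix (Fin 2) (Fin 2) ℂ)
    (K C : Bool → Bool → Matrix (Fin 2) (Fin 2) ℂ) (hvalid : ValidStrategy ρ K C)
    (hopt : (4 + √2 + √(16 * WAB ρ K - 16 * WAB ρ K ^ 2 - 2)) / 8 ≤ WAC ρ K C) :
    ρ (false, false) + ρ (true, true) = 1 ∧
    ρ (false, true) + ρ (true, false) = 1 ∧
    (ρ (false, false) * ρ (false, true)).trace = 1 / 2 := by
  have hpsd := fun x => (hvalid.1 x).1
  have hherm := fun x => (hpsd x).isHermitian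
  have htrace := fun x => (hvalid.1 x).2
  have hnorm := fun x => norm_blochVector_le_one_of_trace_eq_one (hpsd x) (htrace x)
  obtain ⟨hadd, hsub, horth⟩ := encodingVector_square_of_optimal hvalid hopt
  simp only [encodingVector, bitDifference_add_bitDifference, bitDifference_sub_bitDifference,
    norm_smul, Real.norm_two] at hadd hsub horth
  have antipode₀₀ : blochVector (ρ (true, true)) = -blochVector (ρ (false, false)) :=
    eq_neg_of_norm_sub_eq (hnorm _) (hnorm _) (by linarith)
  have antipode₀₁ : blochVector (ρ (true, false)) = -blochVector (ρ (false, true)) :=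
    eq_neg_of_norm_sub_eq (hnorm _) (hnorm _) (by linarith)
  have orthogonal :
      inner ℝ (blochVector (ρ (false, false))) (blochVector (ρ (false, true))) = 0 := by
    simpa [antipode₀₀, antipode₀₁, ← two_smul ℝ, real_inner_smul_left, real_inner_smul_right]
      using horth
  refine ⟨add_eq_one_of_blochVector_eq_neg (hherm _) (hherm _) (htrace _) (htrace _) antipode₀₀,
    add_eq_one_of_blochVector_eq_neg (hherm _) (hherm _) (htrace _) (htrace _) antipode₀₁, ?_⟩
  rw [trace_mul_eq_inner_blochVector (hherm _) (hherm _), orthogonal, htrace, htrace]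
  simp

end Witnesses

/-- Result 2 (geometry of Alice's states): a strategy achieving the optimal
witness pair has pairwise antipodal preparations forming a square on a disk
of the Bloch sphere. -/
theorem selftest_states_square
    (ρ : Bool × Bool → Matrix (Fin 2) (Fin 2) ℂ)
    (K C : Bool → Bool → Matrix (Fin 2) (Fin 2) ℂ)
    (hvalid : ValidStrategy ρ K C)
    (α : ℝ) (hα : α ∈ Set.Icc (1 / 2 : ℝ) ((2 + Real.sqrt 2) / 4))
    (hAB : WAB ρ K = α)
    (hAC : WAC ρ K C = (4 + Real.sqrt 2 + Real.sqrt (16 * α - 16 * α ^ 2 - 2)) / 8) :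
    ρ (false, false) + ρ (true, true) = 1 ∧
    ρ (false, true) + ρ (true, false) = 1 ∧
    (ρ (false, false) * ρ (false, true)).trace = 1 / 2 :=
  selftest_states_square_general ρ K C hvalid (hAB.symm ▸ hAC.ge)

end
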